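/- Let 0<u_-<u_+<1 with u_-+u_+>1. There exists a constant C₁ = C₁(φ_-,φ_+) > 0 such that for every u ∈ L^∞(ℝ_+;[0,1]) and φ ∈ C^+ one has G^+(u,φ) ≥ (1/C₁) ∫_0^∞ (φ_+ − φ(x)) dx − C₁. -/

import Mathlib

/-!
Write `L φ = log (1 + e^φ)` and `σ = L'` (the sigmoid), so that `σ (phiOf v) = v`. Since
`gg up (phiOf up) 0` equals `h (phiOf up)` for `h φ = φ - 2 L φ`, the integrand splits as
`[S u - u φ + L φ] + S φ' + [h φ - h φ₊]`.

* The first bracket is the relative entropy of Bernoulli(`u`) with respect to Bernoulli(`σ φ`). It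
  is nonnegative, and it is at most a multiple of `(u - σ φ)²`.
* `h` is concave, and `h (phiOf v) = log (v (1 - v))`. The condition `u₋ + u₊ > 1` makes
  `h φ₋ > h φ₊`, so the chord inequality gives `h φ - h φ₊ ≥ 2 a (φ₊ - φ)` on `[φ₋, φ₊]`
  for some `a > 0`.
* The entropy is controlled by Young's inequality with an `x`-dependent slope,
  `-S (φ' x) ≤ a x φ' x + e^{-a x}`, and integration by parts bounds `∫ x φ'` by `∫ (φ₊ - φ)`.

Integrating, `G⁺ ≥ 2 a ∫ (φ₊ - φ) - a ∫ (φ₊ - φ) - 1 / a`, which is the claim with `C₁ = 1 / a`.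
The same estimates bound the absolute value of the integrand by an integrable function on the
domain of `G⁺`, so its Bochner integral is not a junk value there.
-/

open MeasureTheory Real Filter Topology Set
open scoped Classical

noncomputable section

/-- Bernoulli entropy `s(p) = p log p + (1-p) log (1-p)` (with `0 log 0 = 0`). -/
def S (p : ℝ) : ℝ := p * Real.log p + (1 - p) * Real.log (1 - p)

/-- The integrand `g(u,φ,p) = s(u) + s(p) + (1-u)φ - log(1+e^φ)`. -/
def gg (u φ p : ℝ) : ℝ := S u + S p + (1 - u) * φ - Real.log (1 + Real.exp φ)

/-- The chemical potential `s'(v) = log (v/(1-v))`. -/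
def phiOf (v : ℝ) : ℝ := Real.log (v / (1 - v))

/-- The step function `θ_{a₋,a₊}`. -/
def theta (am ap x : ℝ) : ℝ := if x < 0 then am else ap

/-- Translation by `z`: `(τ_z f)(x) = f(x-z)`. -/
def tau (z : ℝ) (f : ℝ → ℝ) : ℝ → ℝ := fun x => f (x - z)

/-- Membership in `L^∞(ℝ;[0,1])`. -/
def MemU (u : ℝ → ℝ) : Prop := Measurable u ∧ ∀ x, u x ∈ Icc (0:ℝ) 1

/-- Membership in `L^∞(ℝ₊;[0,1])`. -/
def MemUplus (u : ℝ → ℝ) : Prop := Measurable u ∧ ∀ x, 0 ≤ x → u x ∈ Icc (0:ℝ) 1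

/-- The class `C`: absolutely continuous with `0 ≤ φ' ≤ 1` a.e. (equivalently nondecreasing
and 1-Lipschitz) with limits `pm` at `-∞` and `pp` at `+∞`. -/
def MemC (pm pp : ℝ) (φ : ℝ → ℝ) : Prop :=
  (∀ x y : ℝ, x ≤ y → φ x ≤ φ y ∧ φ y - φ x ≤ y - x) ∧
  Tendsto φ atBot (𝓝 pm) ∧ Tendsto φ atTop (𝓝 pp)

/-- The class `C⁺` on the half line. -/
def MemCplus (pm pp : ℝ) (φ : ℝ → ℝ) : Prop :=
  (∀ x y : ℝ, 0 ≤ x → x ≤ y → φ x ≤ φ y ∧ φ y - φ x ≤ y - x) ∧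
  φ 0 = pm ∧ Tendsto φ atTop (𝓝 pp)

/-- Membership in `X = L^∞(ℝ;[0,1]) × C`. -/
def MemX (um up : ℝ) (u φ : ℝ → ℝ) : Prop := MemU u ∧ MemC (phiOf um) (phiOf up) φ

/-- Membership in `X⁺ = L^∞(ℝ₊;[0,1]) × C⁺`. -/
def MemXplus (um up : ℝ) (u φ : ℝ → ℝ) : Prop :=
  MemUplus u ∧ MemCplus (phiOf um) (phiOf up) φ

/-- The finite volume functional `G_ℓ` on the symmetric interval `(-ℓ,ℓ)`. -/
def Gl (um up l : ℝ) (u φ : ℝ → ℝ) : EReal :=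
  if (∀ x ≤ -l, u x = um ∧ φ x = phiOf um) ∧ (∀ x, l ≤ x → u x = up ∧ φ x = phiOf up) then
    (↑(∫ x in Ioo (-l) l, (gg (u x) (φ x) (deriv φ x) - gg up (phiOf up) 0)) : EReal)
  else ⊤

/-- The finite volume functional `G_ℓ⁺` on `(0,ℓ)`. -/
def Glplus (um up l : ℝ) (u φ : ℝ → ℝ) : EReal :=
  if (∀ x, l ≤ x → u x = up ∧ φ x = phiOf up) then
    (↑(∫ x in Ioo (0:ℝ) l, (gg (u x) (φ x) (deriv φ x) - gg up (phiOf up) 0)) : EReal)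
  else ⊤

/-- The infinite volume functional `G` on the whole line, `+∞` off its domain `D`. -/
def GE (um up : ℝ) (u φ : ℝ → ℝ) : EReal :=
  if Integrable (fun x => (u x - theta um up x)^2) volume ∧
      Integrable (fun x => φ x - theta (phiOf um) (phiOf up) x) volume then
    (↑(∫ x, (gg (u x) (φ x) (deriv φ x) - gg up (phiOf up) 0)) : EReal)
  else ⊤

/-- The infinite volume functional `G⁺` on the half line, `+∞` off its domain `D⁺`. -/
def GEplus (um up : ℝ) (u φ : ℝ → ℝ) : EReal :=
  if IntegrableOn (fun x => (u x - up)^2) (Ioi 0) volume ∧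
      IntegrableOn (fun x => φ x - phiOf up) (Ioi 0) volume then
    (↑(∫ x in Ioi (0:ℝ), (gg (u x) (φ x) (deriv φ x) - gg up (phiOf up) 0)) : EReal)
  else ⊤

/-- Convergence of sequences in `X`: weak* in `L^∞(ℝ;[0,1])` and uniform for `φ`. -/
def ConvX (un φn : ℕ → ℝ → ℝ) (u φ : ℝ → ℝ) : Prop :=
  (∀ f : ℝ → ℝ, Integrable f volume →
    Tendsto (fun n => ∫ x, un n x * f x) atTop (𝓝 (∫ x, u x * f x))) ∧
  TendstoUniformly φn φ atTop

/-- Convergence of families indexed by `ℓ → ∞` in `X`. -/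
def ConvXFam (U Φ : ℝ → ℝ → ℝ) (u φ : ℝ → ℝ) : Prop :=
  (∀ f : ℝ → ℝ, Integrable f volume →
    Tendsto (fun l => ∫ x, U l x * f x) atTop (𝓝 (∫ x, u x * f x))) ∧
  TendstoUniformly Φ φ atTop

/-- Convergence of sequences in `X⁺`. -/
def ConvXplus (un φn : ℕ → ℝ → ℝ) (u φ : ℝ → ℝ) : Prop :=
  (∀ f : ℝ → ℝ, IntegrableOn f (Ioi 0) volume →
    Tendsto (fun n => ∫ x in Ioi (0:ℝ), un n x * f x) atTop
      (𝓝 (∫ x in Ioi (0:ℝ), u x * f x))) ∧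
  TendstoUniformlyOn φn φ atTop (Ici 0)

/-- Convergence of families indexed by `ℓ → ∞` in `X⁺`. -/
def ConvXplusFam (U Φ : ℝ → ℝ → ℝ) (u φ : ℝ → ℝ) : Prop :=
  (∀ f : ℝ → ℝ, IntegrableOn f (Ioi 0) volume →
    Tendsto (fun l => ∫ x in Ioi (0:ℝ), U l x * f x) atTop
      (𝓝 (∫ x in Ioi (0:ℝ), u x * f x))) ∧
  TendstoUniformlyOn Φ φ atTop (Ici 0)

/-- The standing wave `ū(x) = 1/2 + (u₊ - 1/2) tanh((u₊ - 1/2) x)`. -/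
def ubarStanding (up : ℝ) (x : ℝ) : ℝ :=
  1/2 + (up - 1/2) * Real.tanh ((up - 1/2) * x)


/-! ### Bernoulli entropy and its Legendre transform -/

/-- The Legendre transform `φ ↦ log (1 + e^φ)` of the Bernoulli entropy. -/
def Lse (φ : ℝ) : ℝ := Real.log (1 + Real.exp φ)

lemma hasDerivAt_Lse (φ : ℝ) : HasDerivAt Lse (sigmoid φ) φ := by
  have h1 : HasDerivAt (fun x : ℝ => 1 + Real.exp x) (Real.exp φ) φ :=
    (Real.hasDerivAt_exp φ).const_add 1
  have h2 := h1.log (by positivity)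
  have h3 : sigmoid φ = Real.exp φ / (1 + Real.exp φ) := by
    rw [sigmoid_def, Real.exp_neg]
    have := Real.exp_pos φ
    field_simp
    ring
  rw [h3]
  exact h2

lemma deriv_Lse : deriv Lse = sigmoid := funext fun x => (hasDerivAt_Lse x).deriv

lemma differentiable_Lse : Differentiable ℝ Lse := fun x => (hasDerivAt_Lse x).differentiableAt

lemma convexOn_Lse : ConvexOn ℝ univ Lse :=
  Monotone.convexOn_univ_of_deriv differentiable_Lse (by rw [deriv_Lse]; exact sigmoid_monotone)

lemma log_sigmoid_eq (φ : ℝ) : Real.log (sigmoid φ) = φ - Lse φ := by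
  have h : sigmoid φ = Real.exp φ / (1 + Real.exp φ) := by
    rw [sigmoid_def, Real.exp_neg]
    have := Real.exp_pos φ
    field_simp
    ring
  rw [h, Real.log_div (by positivity) (by positivity), Real.log_exp, Lse]

lemma log_one_sub_sigmoid (φ : ℝ) : Real.log (1 - sigmoid φ) = -Lse φ := by
  rw [← sigmoid_neg, sigmoid_def, neg_neg, Real.log_inv, Lse]

lemma sigmoid_phiOf {v : ℝ} (h0 : 0 < v) (h1 : v < 1) : sigmoid (phiOf v) = v := by
  have : 0 < 1 - v := by linarith
  rw [sigmoid_def, phiOf, Real.exp_neg, Real.exp_log (by positivity)]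
  field_simp
  ring

lemma Lse_phiOf {v : ℝ} (h0 : 0 < v) (h1 : v < 1) : Lse (phiOf v) = -Real.log (1 - v) := by
  have := log_one_sub_sigmoid (phiOf v)
  rw [sigmoid_phiOf h0 h1] at this
  linarith

lemma phiOf_eq {v : ℝ} (h0 : 0 < v) (h1 : v < 1) :
    phiOf v = Real.log v - Real.log (1 - v) := by
  rw [phiOf, Real.log_div (by linarith) (by linarith)]

lemma sub_le_mul_log_sub {u q : ℝ} (hu : 0 ≤ u) (hq : 0 < q) :
    u - q ≤ u * (Real.log u - Real.log q) := by
  rcases hu.eq_or_lt with rfl | hu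
  · simp [hq.le]
  · have h := Real.log_le_sub_one_of_pos (div_pos hq hu)
    rw [Real.log_div hq.ne' hu.ne'] at h
    have h2 := mul_le_mul_of_nonneg_left h hu.le
    have h3 : u * (q / u - 1) = q - u := by field_simp
    linarith

lemma mul_log_sub_le {u q : ℝ} (hu : 0 ≤ u) (hq : 0 < q) :
    u * (Real.log u - Real.log q) ≤ u * (u / q - 1) := by
  rcases hu.eq_or_lt with rfl | hu
  · simp
  · have h := Real.log_le_sub_one_of_pos (div_pos hu hq)
    rw [Real.log_div hu.ne' hq.ne'] at h
    exact mul_le_mul_of_nonneg_left h hu.le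

/-- The Fenchel defect is the relative entropy between Bernoulli laws of parameters `u`, `σ φ`. -/
lemma defect_eq (u φ : ℝ) : S u - u * φ + Lse φ =
    u * (Real.log u - Real.log (sigmoid φ)) +
      (1 - u) * (Real.log (1 - u) - Real.log (1 - sigmoid φ)) := by
  rw [log_sigmoid_eq, log_one_sub_sigmoid, S]; ring

lemma defect_nonneg {u : ℝ} (φ : ℝ) (hu : u ∈ Icc (0:ℝ) 1) : 0 ≤ S u - u * φ + Lse φ := by
  rw [defect_eq]
  have h1 := sub_le_mul_log_sub hu.1 (sigmoid_pos φ)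
  have h2 := sub_le_mul_log_sub (u := 1 - u) (q := 1 - sigmoid φ) (by linarith [hu.2])
    (by linarith [sigmoid_lt_one φ])
  linarith

/-- Relative entropy is dominated by the chi-square divergence. -/
lemma defect_le {u φ α β : ℝ} (hu : u ∈ Icc (0:ℝ) 1) (hα : 0 < α) (hβ : β < 1)
    (h1 : α ≤ sigmoid φ) (h2 : sigmoid φ ≤ β) :
    S u - u * φ + Lse φ ≤ (1 / α + 1 / (1 - β)) * (u - sigmoid φ) ^ 2 := by
  rw [defect_eq]
  set q := sigmoid φ
  have hq : 0 < q := by linarith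
  have hq1 : 0 < 1 - q := by linarith
  have e1 := mul_log_sub_le hu.1 hq
  have e2 := mul_log_sub_le (u := 1 - u) (q := 1 - q) (by linarith [hu.2]) hq1
  have e3 : u * (u / q - 1) + (1 - u) * ((1 - u) / (1 - q) - 1) =
      (1 / q + 1 / (1 - q)) * (u - q) ^ 2 := by
    field_simp
    ring
  have e4 : 1 / q ≤ 1 / α := one_div_le_one_div_of_le hα h1
  have e5 : 1 / (1 - q) ≤ 1 / (1 - β) := one_div_le_one_div_of_le (by linarith) (by linarith)
  have e6 := mul_le_mul_of_nonneg_right (add_le_add e4 e5) (sq_nonneg (u - q))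
  linarith

lemma S_nonpos {p : ℝ} (hp : p ∈ Icc (0:ℝ) 1) : S p ≤ 0 := by
  have h1 := mul_nonpos_of_nonneg_of_nonpos hp.1 (Real.log_nonpos hp.1 hp.2)
  have h2 := mul_nonpos_of_nonneg_of_nonpos (a := 1 - p) (b := Real.log (1 - p))
    (by linarith [hp.2]) (Real.log_nonpos (by linarith [hp.2]) (by linarith [hp.1]))
  unfold S
  linarith

/-- Young's inequality for the entropy, with arbitrary slope `b`. -/
lemma neg_S_le {p : ℝ} (b : ℝ) (hp : p ∈ Icc (0:ℝ) 1) : -S p ≤ b * p + Real.exp (-b) := by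
  have h := defect_nonneg (-b) hp
  have h2 : Lse (-b) ≤ Real.exp (-b) := by
    have := Real.log_le_sub_one_of_pos (x := 1 + Real.exp (-b)) (by positivity)
    unfold Lse
    linarith
  linarith

lemma gg_sub_eq {up : ℝ} (h0 : 0 < up) (h1 : up < 1) (u φ p : ℝ) :
    gg u φ p - gg up (phiOf up) 0 =
      (S u - u * φ + Lse φ) + S p +
        ((φ - 2 * Lse φ) - (phiOf up - 2 * Lse (phiOf up))) := by
  have h2 : S up - up * phiOf up + Lse (phiOf up) = 0 := by
    rw [Lse_phiOf h0 h1, phiOf_eq h0 h1, S]; ring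
  have h3 : S 0 = 0 := by simp [S]
  have e : ∀ u φ p : ℝ, gg u φ p = S u + S p + (1 - u) * φ - Lse φ := fun _ _ _ => rfl
  rw [e, e, h3]
  linear_combination -h2

lemma phiOf_lt {um up : ℝ} (h0 : 0 < um) (h1 : um < up) (h2 : up < 1) :
    phiOf um < phiOf up := by
  rw [← sigmoid_lt_iff, sigmoid_phiOf h0 (by linarith), sigmoid_phiOf (by linarith) h2]
  exact h1

/-- The chord lower bound for the concave function `φ ↦ φ - 2 log (1 + e^φ)`. -/
lemma exists_chord {um up : ℝ} (h0 : 0 < um) (h1 : um < up) (h2 : up < 1)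
    (hsum : 1 < um + up) :
    ∃ a : ℝ, 0 < a ∧ ∀ φ ∈ Icc (phiOf um) (phiOf up),
      2 * a * (phiOf up - φ) ≤
        (φ - 2 * Lse φ) - (phiOf up - 2 * Lse (phiOf up)) := by
  have hlt := phiOf_lt h0 h1 h2
  have hd : 0 < phiOf up - phiOf um := by linarith
  set A := phiOf um - 2 * Lse (phiOf um) with hA
  set B := phiOf up - 2 * Lse (phiOf up) with hB
  have hAB : B < A := by
    rw [hA, hB, Lse_phiOf h0 (by linarith), Lse_phiOf (by linarith) h2,
      phiOf_eq h0 (by linarith), phiOf_eq (by linarith) h2]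
    have hlog : Real.log (up * (1 - up)) < Real.log (um * (1 - um)) := by
      apply Real.log_lt_log
      · exact mul_pos (by linarith) (by linarith)
      · nlinarith
    rw [Real.log_mul (by linarith) (by linarith), Real.log_mul (by linarith) (by linarith)] at hlog
    linarith
  refine ⟨(A - B) / (2 * (phiOf up - phiOf um)), by apply div_pos <;> linarith, ?_⟩
  intro φ hφ
  set t := (phiOf up - φ) / (phiOf up - phiOf um) with ht
  have ht0 : 0 ≤ t := div_nonneg (by linarith [hφ.2]) hd.le
  have ht1 : t ≤ 1 := by rw [ht, div_le_one hd]; linarith [hφ.1]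
  have htd : t * (phiOf up - phiOf um) = phiOf up - φ := by rw [ht]; field_simp
  have hc := convexOn_Lse.2 (mem_univ (phiOf um)) (mem_univ (phiOf up)) ht0
    (by linarith : 0 ≤ 1 - t) (by ring)
  have hφe : t * phiOf um + (1 - t) * phiOf up = φ := by linarith
  simp only [smul_eq_mul, hφe] at hc
  have e : 2 * ((A - B) / (2 * (phiOf up - phiOf um))) * (phiOf up - φ) = t * (A - B) := by
    rw [ht]; field_simp
  rw [e]
  linear_combination (2 : ℝ) * hc + hφe

/-! ### Profiles in `C⁺` -/

section profile

variable {pm pp : ℝ} {φ : ℝ → ℝ}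

lemma MemCplus.mem_Icc (h : MemCplus pm pp φ) {x : ℝ} (hx : 0 ≤ x) : φ x ∈ Icc pm pp := by
  refine ⟨h.2.1 ▸ (h.1 0 x le_rfl hx).1, ?_⟩
  refine ge_of_tendsto h.2.2 ?_
  filter_upwards [eventually_ge_atTop x] with y hy using (h.1 x y hx hy).1

lemma MemCplus.lipschitzOnWith (h : MemCplus pm pp φ) : LipschitzOnWith 1 φ (Ici 0) := by
  refine LipschitzOnWith.of_dist_le_mul fun x hx y hy => ?_
  rw [NNReal.coe_one, one_mul, Real.dist_eq, Real.dist_eq]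
  rcases le_total x y with hxy | hxy
  · have := h.1 x y hx hxy
    rw [abs_sub_comm, abs_of_nonneg (by linarith), abs_sub_comm, abs_of_nonneg (by linarith)]
    exact this.2
  · have := h.1 y x hy hxy
    rw [abs_of_nonneg (by linarith), abs_of_nonneg (by linarith)]
    exact this.2

lemma MemCplus.deriv_mem (h : MemCplus pm pp φ) {x : ℝ} (hx : 0 < x) :
    deriv φ x ∈ Icc (0:ℝ) 1 := by
  have hn : Ici (0:ℝ) ∈ 𝓝 x := Ici_mem_nhds hx
  constructor
  · have hm : MonotoneOn φ (Ici 0) := fun a ha b _ hab => (h.1 a b ha hab).1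
    rw [← derivWithin_of_mem_nhds hn]
    exact hm.derivWithin_nonneg
  · have := norm_deriv_le_of_lipschitzOn hn h.lipschitzOnWith
    rw [NNReal.coe_one, Real.norm_eq_abs] at this
    exact (le_abs_self _).trans this

/-- Integration by parts on `[0, l]`; the boundary term `l (φ l - φ₊)` is nonpositive. -/
lemma MemCplus.intervalIntegral_le (h : MemCplus pm pp φ)
    (hint : IntegrableOn (fun x => pp - φ x) (Ioi 0)) {l : ℝ} (hl : 0 ≤ l) :
    ∫ x in (0:ℝ)..l, x * deriv φ x ≤ ∫ x in Ioi (0:ℝ), (pp - φ x) := by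
  have hsub : uIcc 0 l ⊆ Ici 0 := by
    rw [uIcc_of_le hl]; exact Icc_subset_Ici_self
  have hac : AbsolutelyContinuousOnInterval φ 0 l :=
    (h.lipschitzOnWith.mono hsub).absolutelyContinuousOnInterval
  have hid : AbsolutelyContinuousOnInterval (fun x : ℝ => x) 0 l :=
    (LipschitzWith.id.lipschitzOnWith (s := uIcc 0 l)).absolutelyContinuousOnInterval
  have hparts := hid.integral_mul_deriv_eq_deriv_mul hac
  have hφi : IntervalIntegrable φ volume 0 l := hac.continuousOn.intervalIntegrable
  have e : ∫ x in (0:ℝ)..l, (pp - φ x) = l * pp - ∫ x in (0:ℝ)..l, φ x := by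
    rw [intervalIntegral.integral_sub (by simp) hφi]
    simp
  have e2 : ∫ x in (0:ℝ)..l, (pp - φ x) ≤ ∫ x in Ioi (0:ℝ), (pp - φ x) := by
    rw [intervalIntegral.integral_of_le hl]
    refine setIntegral_mono_set hint ?_ Ioc_subset_Ioi_self.eventuallyLE
    rw [EventuallyLE, ae_restrict_iff' measurableSet_Ioi]
    exact ae_of_all _ fun x hx => sub_nonneg.2 (h.mem_Icc (le_of_lt hx)).2
  have e3 : l * φ l ≤ l * pp := mul_le_mul_of_nonneg_left (h.mem_Icc hl).2 hl
  simp only [deriv_id'', one_mul, zero_mul, sub_zero] at hparts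
  linarith

lemma MemCplus.integrableOn_mul_deriv (h : MemCplus pm pp φ)
    (hint : IntegrableOn (fun x => pp - φ x) (Ioi 0)) :
    IntegrableOn (fun x => x * deriv φ x) (Ioi 0) := by
  refine integrableOn_Ioi_of_intervalIntegral_norm_bounded (l := atTop) (b := fun x : ℝ => x)
    (∫ x in Ioi (0:ℝ), (pp - φ x)) 0 (fun l => ?_) tendsto_id ?_
  · refine Measure.integrableOn_of_bounded (M := |l|) (by simp)
      (measurable_id.mul (measurable_deriv φ)).aestronglyMeasurable ?_
    rw [ae_restrict_iff' measurableSet_Ioc]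
    refine ae_of_all _ fun x hx => ?_
    have hd := h.deriv_mem hx.1
    rw [Real.norm_eq_abs, abs_of_nonneg (mul_nonneg hx.1.le hd.1)]
    calc x * deriv φ x ≤ x * 1 := mul_le_mul_of_nonneg_left hd.2 hx.1.le
      _ ≤ |l| := by rw [mul_one]; exact hx.2.trans (le_abs_self l)
  · filter_upwards [eventually_ge_atTop 0] with l hl
    refine le_trans (le_of_eq ?_) (h.intervalIntegral_le hint hl)
    rw [intervalIntegral.integral_of_le hl, intervalIntegral.integral_of_le hl]
    refine setIntegral_congr_fun measurableSet_Ioc fun x hx => ?_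
    exact (abs_of_nonneg (mul_nonneg hx.1.le (h.deriv_mem hx.1).1))

lemma MemCplus.integral_mul_deriv_le (h : MemCplus pm pp φ)
    (hint : IntegrableOn (fun x => pp - φ x) (Ioi 0)) :
    ∫ x in Ioi (0:ℝ), x * deriv φ x ≤ ∫ x in Ioi (0:ℝ), (pp - φ x) := by
  refine le_of_tendsto (intervalIntegral_tendsto_integral_Ioi 0
    (h.integrableOn_mul_deriv hint) tendsto_id) ?_
  filter_upwards [eventually_ge_atTop 0] with l hl using h.intervalIntegral_le hint hl

end profile

lemma measurable_S : Measurable S := by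
  unfold S
  fun_prop

/-! ### The lower bound -/

/-- The integrand of `G⁺` is integrable as soon as `(u, φ)` lies in the domain of `G⁺`. -/
lemma integrableOn_gg {um up : ℝ} (h0 : 0 < um) (h1 : um < up) (h2 : up < 1)
    {u φ : ℝ → ℝ} (hu : MemUplus u) (hφ : MemCplus (phiOf um) (phiOf up) φ)
    (hiu : IntegrableOn (fun x => (u x - up) ^ 2) (Ioi 0))
    (hiφ : IntegrableOn (fun x => phiOf up - φ x) (Ioi 0))
    (hh : ∀ t ∈ Icc (phiOf um) (phiOf up),
      0 ≤ (t - 2 * Lse t) - (phiOf up - 2 * Lse (phiOf up))) :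
    IntegrableOn (fun x => gg (u x) (φ x) (deriv φ x) - gg up (phiOf up) 0) (Ioi 0) := by
  set K := 1 / um + 1 / (1 - up) with hK
  have hK0 : 0 ≤ K := add_nonneg (by positivity) (one_div_nonneg.2 (by linarith))
  have hdom : IntegrableOn (fun x => K * (2 * (u x - up) ^ 2 + 2 * (phiOf up - φ x)) +
      (x * deriv φ x + Real.exp (-1 * x)) + (phiOf up - φ x)) (Ioi 0) :=
    ((((hiu.const_mul 2).add (hiφ.const_mul 2)).const_mul K).add
      ((hφ.integrableOn_mul_deriv hiφ).add (exp_neg_integrableOn_Ioi 0 one_pos))).add hiφ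
  refine Integrable.mono' hdom ?_ ?_
  · have mφ : AEMeasurable φ (volume.restrict (Ioi 0)) := by
      have := hiφ.aestronglyMeasurable.aemeasurable.const_sub (phiOf up)
      simpa using this
    have mu := hu.1.aemeasurable (μ := volume.restrict (Ioi 0))
    have md := (measurable_deriv φ).aemeasurable (μ := volume.restrict (Ioi 0))
    have mL : AEMeasurable (fun x => Real.log (1 + Real.exp (φ x))) (volume.restrict (Ioi 0)) :=
      Real.measurable_log.comp_aemeasurable
        ((Real.measurable_exp.comp_aemeasurable mφ).const_add 1)
    refine AEMeasurable.aestronglyMeasurable (AEMeasurable.sub_const ?_ _)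
    exact (((measurable_S.comp_aemeasurable mu).add (measurable_S.comp_aemeasurable md)).add
      ((mu.const_sub 1).mul mφ)).sub mL
  · rw [ae_restrict_iff' measurableSet_Ioi]
    refine ae_of_all _ fun x hx => ?_
    have hx : (0:ℝ) < x := hx
    have hux := hu.2 x hx.le
    have hφx := hφ.mem_Icc hx.le
    have hdx := hφ.deriv_mem hx
    have hq1 : um ≤ sigmoid (φ x) := by
      have := sigmoid_le hφx.1
      rwa [sigmoid_phiOf h0 (by linarith)] at this
    have hq2 : sigmoid (φ x) ≤ up := by
      have := sigmoid_le hφx.2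
      rwa [sigmoid_phiOf (by linarith) h2] at this
    have hq3 : up - sigmoid (φ x) ≤ phiOf up - φ x := by
      have := image_sub_le_mul_sub_of_deriv_le differentiable_sigmoid (C := 1)
        (fun t => by
          rw [deriv_sigmoid]
          nlinarith [sigmoid_pos t, sigmoid_lt_one t]) hφx.2
      rwa [sigmoid_phiOf (by linarith) h2, one_mul] at this
    have hL : Lse (phiOf up) - Lse (φ x) ≤ phiOf up - φ x := by
      have := image_sub_le_mul_sub_of_deriv_le differentiable_Lse (C := 1)
        (fun t => by rw [deriv_Lse]; exact sigmoid_le_one t) hφx.2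
      rwa [one_mul] at this
    have d0 := defect_nonneg (φ x) hux
    have d1 := defect_le hux h0 h2 hq1 hq2
    have d2 : (u x - sigmoid (φ x)) ^ 2 ≤ 2 * (u x - up) ^ 2 + 2 * (phiOf up - φ x) := by
      -- `(up - σ φ)² ≤ up - σ φ` because both numbers lie in `[0, 1]`
      have : (up - sigmoid (φ x)) ^ 2 ≤ up - sigmoid (φ x) := by
        nlinarith
      nlinarith [sq_nonneg ((u x - up) - (up - sigmoid (φ x)))]
    have d3 := mul_le_mul_of_nonneg_left d2 hK0
    have s0 := S_nonpos hdx
    have s1 := neg_S_le x hdx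
    have hx1 := hh _ hφx
    rw [gg_sub_eq (by linarith) h2, Real.norm_eq_abs, abs_le, neg_one_mul]
    have hpos : 0 ≤ phiOf up - φ x := sub_nonneg.2 hφx.2
    have hpos2 : 0 ≤ x * deriv φ x := mul_nonneg hx.le hdx.1
    have hpos3 := Real.exp_pos (-x)
    constructor <;> linarith

/-- For `u₋ + u₊ > 1` there is `C₁ = C₁(φ₋,φ₊) > 0` such that for every
`u ∈ L^∞(ℝ₊;[0,1])` and `φ ∈ C⁺`, `G⁺(u,φ) ≥ (1/C₁) ∫_0^∞ (φ₊ - φ) dx - C₁`. -/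
theorem stmt_10 (um up : ℝ) (h0 : 0 < um) (h1 : um < up) (h2 : up < 1)
    (hsum : 1 < um + up) :
    ∃ C1 : ℝ, 0 < C1 ∧ ∀ u φ : ℝ → ℝ,
      MemUplus u → MemCplus (phiOf um) (phiOf up) φ →
      (↑(C1⁻¹ * (∫ x in Ioi (0:ℝ), (phiOf up - φ x)) - C1) : EReal) ≤
        GEplus um up u φ := by
  obtain ⟨a, ha, hchord⟩ := exists_chord h0 h1 h2 hsum
  refine ⟨a⁻¹, inv_pos.2 ha, fun u φ hu hφ => ?_⟩
  unfold GEplus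
  split_ifs with hD
  swap
  · exact le_top
  obtain ⟨hiu, hiφ'⟩ := hD
  have hiφ : IntegrableOn (fun x => phiOf up - φ x) (Ioi 0) := by
    simpa [Pi.neg_def] using hiφ'.neg
  have hxd := hφ.integrableOn_mul_deriv hiφ
  have hexp : IntegrableOn (fun x : ℝ => Real.exp (-a * x)) (Ioi 0) :=
    exp_neg_integrableOn_Ioi 0 ha
  have hg := integrableOn_gg h0 h1 h2 hu hφ hiu hiφ fun t ht =>
    (mul_nonneg (by positivity) (sub_nonneg.2 ht.2)).trans (hchord t ht)
  have hlow : ∫ x in Ioi (0:ℝ), (2 * a * (phiOf up - φ x) -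
      (a * (x * deriv φ x) + Real.exp (-a * x))) ≤
      ∫ x in Ioi (0:ℝ), (gg (u x) (φ x) (deriv φ x) - gg up (phiOf up) 0) := by
    refine setIntegral_mono_on ((hiφ.const_mul _).sub ((hxd.const_mul a).add hexp)) hg
      measurableSet_Ioi fun x hx => ?_
    have hx : (0:ℝ) < x := hx
    have d0 := defect_nonneg (φ x) (hu.2 x hx.le)
    have s1 := neg_S_le (a * x) (hφ.deriv_mem hx)
    have hc := hchord _ (hφ.mem_Icc hx.le)
    rw [gg_sub_eq (by linarith) h2, neg_mul]
    linarith
  have hxd2 : IntegrableOn (fun x => a * (x * deriv φ x)) (Ioi 0) := hxd.const_mul a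
  have hsum2 : IntegrableOn (fun x => a * (x * deriv φ x) + Real.exp (-a * x)) (Ioi 0) :=
    hxd2.add hexp
  rw [integral_sub (hiφ.const_mul _) hsum2, integral_add hxd2 hexp,
    integral_const_mul, integral_const_mul, integral_exp_mul_Ioi (by linarith)] at hlow
  have hparts := mul_le_mul_of_nonneg_left (hφ.integral_mul_deriv_le hiφ) ha.le
  have he : -Real.exp (-a * 0) / -a = a⁻¹ := by
    rw [mul_zero, Real.exp_zero, neg_div_neg_eq, one_div]
  rw [he] at hlow
  rw [inv_inv, EReal.coe_le_coe_iff]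
  linarith

end
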